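/- arXiv:1712.04730 — 11 statements merged into one kernel-verified Lean document; each statement's English description precedes it below -/
import Mathlib

section
/- For every integer n ≥ 1, every real ψ with 0 < ψ < 1 and every real ω > 0, one has Σ_{y=0}^{n} y · C(n,y) ψ^y (1−ψ)^{n−y} ω^{(n−y)y} = n ψ K_{n,1}(ψ,ω); equivalently, the mean of the (L)MBD(ψ,ω) satisfies E_{n,ψ,ω} = n ψ τ_1(ψ,ω). -/
open Filter Finset

/-- `K n a ψ ω = Σ_{i=0}^{n−a} C(n−a,i) ψ^i (1−ψ)^{n−a−i} ω^{(n−a−i)(i+a)}`. -/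
noncomputable def K (n a : ℕ) (ψ ω : ℝ) : ℝ :=
  ∑ i ∈ Finset.range (n - a + 1),
    (Nat.choose (n - a) i : ℝ) * ψ ^ i * (1 - ψ) ^ (n - a - i) * ω ^ ((n - a - i) * (i + a))

/-- `τ j = K n j / K n 0`. -/
noncomputable def τ (n j : ℕ) (ψ ω : ℝ) : ℝ := K n j ψ ω / K n 0 ψ ω

/-- pmf of the (L)MBD. -/
noncomputable def lmbd (n : ℕ) (ψ ω : ℝ) (y : ℕ) : ℝ :=
  (Nat.choose n y : ℝ) * ψ ^ y * (1 - ψ) ^ (n - y) * ω ^ ((n - y) * y) / K n 0 ψ ω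

/-- mean of the (L)MBD. -/
noncomputable def lmbdMean (n : ℕ) (ψ ω : ℝ) : ℝ :=
  ∑ y ∈ Finset.range (n + 1), (y : ℝ) * lmbd n ψ ω y

/-- variance of the (L)MBD. -/
noncomputable def lmbdVar (n : ℕ) (ψ ω : ℝ) : ℝ :=
  ∑ y ∈ Finset.range (n + 1), ((y : ℝ) - lmbdMean n ψ ω) ^ 2 * lmbd n ψ ω y

/-- The unnormalized first moment of the (L)MBD, with `n = m + 1`. -/
theorem sum_mul_lmbd_weight (m : ℕ) (ψ ω : ℝ) :
    (∑ y ∈ Finset.range (m + 1 + 1), (y : ℝ) * ((Nat.choose (m + 1) y : ℝ) * ψ ^ y *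
        (1 - ψ) ^ (m + 1 - y) * ω ^ ((m + 1 - y) * y)))
      = ((m + 1 : ℕ) : ℝ) * ψ * K (m + 1) 1 ψ ω := by
  rw [Finset.sum_range_succ', K, Finset.mul_sum]
  simp only [Nat.cast_zero, zero_mul, add_zero, Nat.add_sub_cancel, Nat.add_sub_add_right]
  refine Finset.sum_congr rfl fun i _ => ?_
  have h : ((m + 1 : ℕ) : ℝ) * (m.choose i : ℝ) =
      ((m + 1).choose (i + 1) : ℝ) * ((i + 1 : ℕ) : ℝ) := by
    exact_mod_cast Nat.add_one_mul_choose_eq m i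
  linear_combination
    (-(ψ ^ (i + 1) * (1 - ψ) ^ (m - i) * ω ^ ((m - i) * (i + 1)))) * h

theorem stmt_0 (n : ℕ) (hn : 1 ≤ n) (ψ : ℝ) (hψ0 : 0 < ψ) (hψ1 : ψ < 1)
    (ω : ℝ) (hω : 0 < ω) :
    (∑ y ∈ Finset.range (n + 1),
        (y : ℝ) * ((Nat.choose n y : ℝ) * ψ ^ y * (1 - ψ) ^ (n - y) * ω ^ ((n - y) * y)))
      = (n : ℝ) * ψ * K n 1 ψ ω ∧
    lmbdMean n ψ ω = (n : ℝ) * ψ * τ n 1 ψ ω := by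
  obtain ⟨m, rfl⟩ := Nat.exists_eq_add_of_le' hn
  have h := sum_mul_lmbd_weight m ψ ω
  refine ⟨h, ?_⟩
  simp only [lmbdMean, lmbd, τ, ← mul_div_assoc]
  rw [← Finset.sum_div, h]
end

section
/- For every integer n ≥ 2, every real ψ with 0 < ψ < 1 and every real ω > 0, one has Σ_{y=0}^{n} y(y−1) · C(n,y) ψ^y (1−ψ)^{n−y} ω^{(n−y)y} = n(n−1) ψ² K_{n,2}(ψ,ω); consequently the variance of the (L)MBD(ψ,ω) satisfies V_{n,ψ,ω} = n ψ η where η = τ_1(ψ,ω) − ψ( n τ_1(ψ,ω)² − (n−1) τ_2(ψ,ω) ). -/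
open Filter Finset

/-- The unnormalised first moment of the (L)MBD. -/
theorem sum_mul_weight_eq_K_one (n : ℕ) (hn : 1 ≤ n) (ψ ω : ℝ) :
    (∑ y ∈ Finset.range (n + 1),
        (y : ℝ) * ((Nat.choose n y : ℝ) * ψ ^ y * (1 - ψ) ^ (n - y) * ω ^ ((n - y) * y)))
      = (n : ℝ) * ψ * K n 1 ψ ω := by
  obtain ⟨m, rfl⟩ := Nat.exists_eq_add_of_le' hn
  rw [Finset.sum_range_succ', K, Finset.mul_sum]
  simp only [Nat.cast_zero, zero_mul, add_zero, Nat.add_sub_cancel, Nat.add_sub_add_right]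
  refine Finset.sum_congr rfl fun i _ => ?_
  have h : ((m : ℝ) + 1) * (m.choose i : ℝ) = ((m + 1).choose (i + 1) : ℝ) * ((i : ℝ) + 1) := by
    exact_mod_cast Nat.add_one_mul_choose_eq m i
  push_cast
  linear_combination (-ψ ^ (i + 1) * (1 - ψ) ^ (m - i) * ω ^ ((m - i) * (i + 1))) * h

/-- The unnormalised second factorial moment of the (L)MBD. -/
theorem sum_mul_pred_mul_weight_eq_K_two (n : ℕ) (hn : 2 ≤ n) (ψ ω : ℝ) :
    (∑ y ∈ Finset.range (n + 1),
        (y : ℝ) * ((y : ℝ) - 1) *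
          ((Nat.choose n y : ℝ) * ψ ^ y * (1 - ψ) ^ (n - y) * ω ^ ((n - y) * y)))
      = (n : ℝ) * ((n : ℝ) - 1) * ψ ^ 2 * K n 2 ψ ω := by
  obtain ⟨m, rfl⟩ := Nat.exists_eq_add_of_le' hn
  rw [Finset.sum_range_succ', Finset.sum_range_succ', K, Finset.mul_sum]
  simp only [Nat.cast_zero, zero_mul, add_zero, zero_add, Nat.cast_one, sub_self, mul_zero,
    Nat.add_sub_cancel, add_assoc, Nat.reduceAdd, Nat.add_sub_add_right]
  refine Finset.sum_congr rfl fun i _ => ?_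
  have h₁ : ((m : ℝ) + 1) * (m.choose i : ℝ) = ((m + 1).choose (i + 1) : ℝ) * ((i : ℝ) + 1) := by
    exact_mod_cast Nat.add_one_mul_choose_eq m i
  have h₂ : ((m : ℝ) + 2) * ((m + 1).choose (i + 1) : ℝ)
      = ((m + 2).choose (i + 2) : ℝ) * ((i : ℝ) + 2) := by
    exact_mod_cast Nat.add_one_mul_choose_eq (m + 1) (i + 1)
  push_cast
  linear_combination (-ψ ^ (i + 2) * (1 - ψ) ^ (m - i) * ω ^ ((m - i) * (i + 2))) *
    (((m : ℝ) + 2) * h₁ + ((i : ℝ) + 1) * h₂)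

theorem K_zero_pos (n : ℕ) {ψ ω : ℝ} (hψ0 : 0 < ψ) (hψ1 : ψ < 1) (hω : 0 < ω) :
    0 < K n 0 ψ ω := by
  have hψ : 0 < 1 - ψ := sub_pos.2 hψ1
  refine Finset.sum_pos (fun i hi => ?_) (by simp)
  have : 0 < (n - 0).choose i := Nat.choose_pos (Nat.lt_succ_iff.1 (Finset.mem_range.1 hi))
  positivity

theorem lmbdMean_eq (n : ℕ) (hn : 1 ≤ n) (ψ ω : ℝ) :
    lmbdMean n ψ ω = (n : ℝ) * ψ * τ n 1 ψ ω := by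
  simp only [lmbdMean, lmbd, τ, ← mul_div_assoc]
  rw [← Finset.sum_div, sum_mul_weight_eq_K_one n hn]

theorem sum_lmbd (n : ℕ) {ψ ω : ℝ} (hK : K n 0 ψ ω ≠ 0) :
    ∑ y ∈ Finset.range (n + 1), lmbd n ψ ω y = 1 := by
  simp only [lmbd]
  rw [← Finset.sum_div, div_eq_one_iff_eq hK]
  simp [K]

theorem sum_mul_pred_mul_lmbd (n : ℕ) (hn : 2 ≤ n) (ψ ω : ℝ) :
    ∑ y ∈ Finset.range (n + 1), (y : ℝ) * ((y : ℝ) - 1) * lmbd n ψ ω y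
      = (n : ℝ) * ((n : ℝ) - 1) * ψ ^ 2 * τ n 2 ψ ω := by
  simp only [lmbd, τ, ← mul_div_assoc]
  rw [← Finset.sum_div, sum_mul_pred_mul_weight_eq_K_two n hn]

/-- The variance in terms of the mean and the second factorial moment. -/
theorem lmbdVar_eq (n : ℕ) {ψ ω : ℝ} (hK : K n 0 ψ ω ≠ 0) :
    lmbdVar n ψ ω = ∑ y ∈ Finset.range (n + 1), (y : ℝ) * ((y : ℝ) - 1) * lmbd n ψ ω y
      + lmbdMean n ψ ω - lmbdMean n ψ ω ^ 2 := by
  have expand : lmbdVar n ψ ω =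
      ∑ y ∈ Finset.range (n + 1), (y : ℝ) * ((y : ℝ) - 1) * lmbd n ψ ω y
      + (1 - 2 * lmbdMean n ψ ω) * ∑ y ∈ Finset.range (n + 1), (y : ℝ) * lmbd n ψ ω y
      + lmbdMean n ψ ω ^ 2 * ∑ y ∈ Finset.range (n + 1), lmbd n ψ ω y := by
    rw [lmbdVar, Finset.mul_sum, Finset.mul_sum, ← Finset.sum_add_distrib,
      ← Finset.sum_add_distrib]
    exact Finset.sum_congr rfl fun y _ => by ring
  rw [expand, sum_lmbd n hK, ← lmbdMean]
  ring

theorem stmt_1 (n : ℕ) (hn : 2 ≤ n) (ψ : ℝ) (hψ0 : 0 < ψ) (hψ1 : ψ < 1)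
    (ω : ℝ) (hω : 0 < ω) :
    (∑ y ∈ Finset.range (n + 1),
        (y : ℝ) * ((y : ℝ) - 1) *
          ((Nat.choose n y : ℝ) * ψ ^ y * (1 - ψ) ^ (n - y) * ω ^ ((n - y) * y)))
      = (n : ℝ) * ((n : ℝ) - 1) * ψ ^ 2 * K n 2 ψ ω ∧
    lmbdVar n ψ ω =
      (n : ℝ) * ψ *
        (τ n 1 ψ ω - ψ * ((n : ℝ) * (τ n 1 ψ ω) ^ 2 - ((n : ℝ) - 1) * τ n 2 ψ ω)) := by
  refine ⟨sum_mul_pred_mul_weight_eq_K_two n hn ψ ω, ?_⟩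
  rw [lmbdVar_eq n (K_zero_pos n hψ0 hψ1 hω).ne', sum_mul_pred_mul_lmbd n hn,
    lmbdMean_eq n (by omega)]
  ring
end

section
/- Fix an integer n ≥ 1 and a real ψ with 0 < ψ < 1. Then, as ω → 0 from the right: p_{n,ψ,ω}(0) tends to (1−ψ)^n/(ψ^n+(1−ψ)^n), p_{n,ψ,ω}(n) tends to ψ^n/(ψ^n+(1−ψ)^n), and for every integer y with 0 < y < n, p_{n,ψ,ω}(y) tends to 0. -/
open Filter Finset

/-- At `ω = 0` only the two extreme terms of `K n 0` survive. -/
lemma K_zero_zero (n : ℕ) (hn : 1 ≤ n) (ψ : ℝ) : K n 0 ψ 0 = ψ ^ n + (1 - ψ) ^ n := by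
  obtain ⟨m, rfl⟩ : ∃ m, n = m + 1 := ⟨n - 1, by omega⟩
  unfold K
  simp only [Nat.sub_zero, Nat.add_zero]
  rw [Finset.sum_range_succ, Finset.sum_range_succ', Finset.sum_eq_zero]
  · simp [add_comm]
  · intro i hi
    have hi : i < m := by simpa using hi
    have h : (m + 1 - (i + 1)) * (i + 1) ≠ 0 :=
      Nat.mul_ne_zero (by omega) (by omega)
    rw [zero_pow h, mul_zero]

lemma continuous_K (n a : ℕ) (ψ : ℝ) : Continuous (K n a ψ) := by
  unfold K
  fun_prop

/-- The pmf of the (L)MBD extends continuously to `ω = 0`. -/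
lemma tendsto_lmbd (n : ℕ) (hn : 1 ≤ n) (ψ : ℝ) (hψ0 : 0 < ψ) (hψ1 : ψ < 1) (y : ℕ) :
    Tendsto (fun ω : ℝ => lmbd n ψ ω y) (nhdsWithin 0 (Set.Ioi 0)) (nhds (lmbd n ψ 0 y)) := by
  have hK : K n 0 ψ 0 ≠ 0 := by
    have h : 0 < 1 - ψ := sub_pos.2 hψ1
    rw [K_zero_zero n hn]
    positivity
  have hc : ContinuousAt (fun ω : ℝ => lmbd n ψ ω y) 0 := by
    unfold lmbd
    exact ContinuousAt.div (by fun_prop) (continuous_K n 0 ψ).continuousAt hK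
  exact hc.tendsto.mono_left nhdsWithin_le_nhds

theorem stmt_3 (n : ℕ) (hn : 1 ≤ n) (ψ : ℝ) (hψ0 : 0 < ψ) (hψ1 : ψ < 1) :
    Filter.Tendsto (fun ω : ℝ => lmbd n ψ ω 0) (nhdsWithin 0 (Set.Ioi 0))
      (nhds ((1 - ψ) ^ n / (ψ ^ n + (1 - ψ) ^ n))) ∧
    Filter.Tendsto (fun ω : ℝ => lmbd n ψ ω n) (nhdsWithin 0 (Set.Ioi 0))
      (nhds (ψ ^ n / (ψ ^ n + (1 - ψ) ^ n))) ∧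
    ∀ y : ℕ, 0 < y → y < n →
      Filter.Tendsto (fun ω : ℝ => lmbd n ψ ω y) (nhdsWithin 0 (Set.Ioi 0)) (nhds 0) := by
  refine ⟨?_, ?_, fun y hy0 hyn => ?_⟩
  · simpa [lmbd, K_zero_zero n hn] using tendsto_lmbd n hn ψ hψ0 hψ1 0
  · simpa [lmbd, K_zero_zero n hn] using tendsto_lmbd n hn ψ hψ0 hψ1 n
  · have h : (n - y) * y ≠ 0 := Nat.mul_ne_zero (by omega) hy0.ne'
    have hy := tendsto_lmbd n hn ψ hψ0 hψ1 y
    rwa [show lmbd n ψ 0 y = 0 by rw [lmbd, zero_pow h, mul_zero, zero_div]] at hy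
end

section
/- Fix an integer n ≥ 1 and a real ψ with 0 < ψ < 1. Then, as ω → 0 from the right, the variance V_{n,ψ,ω} of the (L)MBD(ψ,ω) tends to n² ψ^n/(ψ^n+(1−ψ)^n) − n² ψ^{2n}/(ψ^n+(1−ψ)^n)². -/
open Filter Finset

theorem sum_range_mul_zero_pow {n : ℕ} (hn : 1 ≤ n) (g : ℕ → ℝ) :
    ∑ y ∈ Finset.range (n + 1), g y * (0 : ℝ) ^ ((n - y) * y) = g 0 + g n := by
  obtain ⟨m, rfl⟩ : ∃ m, n = m + 1 := ⟨n - 1, by omega⟩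
  rw [Finset.sum_range_succ, Finset.sum_range_succ', Finset.sum_eq_zero]
  · simp
  · intro y hy
    have hy' : (m + 1 - (y + 1)) * (y + 1) ≠ 0 := by
      have := Finset.mem_range.mp hy
      exact Nat.mul_ne_zero (by omega) (by omega)
    rw [zero_pow hy', mul_zero]

theorem K_zero_right {n : ℕ} (hn : 1 ≤ n) (ψ : ℝ) : K n 0 ψ 0 = ψ ^ n + (1 - ψ) ^ n := by
  have h := sum_range_mul_zero_pow hn
    (fun y => (Nat.choose n y : ℝ) * ψ ^ y * (1 - ψ) ^ (n - y))
  simp only [K, Nat.sub_zero, Nat.add_zero]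
  rw [h]
  simp [add_comm]

theorem sum_mul_lmbd_zero {n : ℕ} (hn : 1 ≤ n) (ψ : ℝ) (f : ℕ → ℝ) :
    ∑ y ∈ Finset.range (n + 1), f y * lmbd n ψ 0 y =
      (f 0 * (1 - ψ) ^ n + f n * ψ ^ n) / (ψ ^ n + (1 - ψ) ^ n) := by
  have h := sum_range_mul_zero_pow hn
    (fun y => f y * ((Nat.choose n y : ℝ) * ψ ^ y * (1 - ψ) ^ (n - y)))
  simp only [lmbd, K_zero_right hn, ← mul_div_assoc, ← Finset.sum_div, ← mul_assoc] at h ⊢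
  rw [h]
  simp

theorem lmbdVar_zero {n : ℕ} (hn : 1 ≤ n) {ψ : ℝ} (hψ : ψ ^ n + (1 - ψ) ^ n ≠ 0) :
    lmbdVar n ψ 0 = (n : ℝ) ^ 2 * ψ ^ n / (ψ ^ n + (1 - ψ) ^ n)
        - (n : ℝ) ^ 2 * ψ ^ (2 * n) / (ψ ^ n + (1 - ψ) ^ n) ^ 2 := by
  rw [lmbdVar, sum_mul_lmbd_zero hn, lmbdMean, sum_mul_lmbd_zero hn, mul_comm 2 n, pow_mul]
  field_simp
  push_cast
  ring

theorem continuousAt_lmbdVar {n : ℕ} {ψ ω : ℝ} (hK : K n 0 ψ ω ≠ 0) :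
    ContinuousAt (fun ω : ℝ => lmbdVar n ψ ω) ω := by
  have hKc : ContinuousAt (fun ω : ℝ => K n 0 ψ ω) ω := by
    unfold K
    fun_prop
  have hp (y : ℕ) : ContinuousAt (fun ω : ℝ => lmbd n ψ ω y) ω := by
    unfold lmbd
    exact ContinuousAt.div (by fun_prop) hKc hK
  unfold lmbdVar lmbdMean
  fun_prop

theorem stmt_5 (n : ℕ) (hn : 1 ≤ n) (ψ : ℝ) (hψ0 : 0 < ψ) (hψ1 : ψ < 1) :
    Filter.Tendsto (fun ω : ℝ => lmbdVar n ψ ω) (nhdsWithin 0 (Set.Ioi 0))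
      (nhds ((n : ℝ) ^ 2 * ψ ^ n / (ψ ^ n + (1 - ψ) ^ n)
        - (n : ℝ) ^ 2 * ψ ^ (2 * n) / (ψ ^ n + (1 - ψ) ^ n) ^ 2)) := by
  have hpos : ψ ^ n + (1 - ψ) ^ n ≠ 0 :=
    (add_pos (pow_pos hψ0 n) (pow_pos (sub_pos.mpr hψ1) n)).ne'
  rw [← lmbdVar_zero hn hpos]
  exact (continuousAt_lmbdVar (by rwa [K_zero_right hn])).tendsto.mono_left nhdsWithin_le_nhds
end

section
/- Let n ≥ 2 be an even integer, let j be an integer with 1 ≤ j ≤ n/2, and let ψ be a real with 0 < ψ < 1. Then, as ω → +∞, τ_j(ψ,ω) tends to (1/ψ^j) · C(n−j, n/2 − j) / C(n, n/2). -/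
open Filter Finset

/-- `x ↦ (2 * m - x) * x` has a unique maximum, attained at `x = m`. -/
theorem mul_lt_sq_of_add_eq_two_mul {m x y : ℕ} (h : y + x = 2 * m) (hx : x ≠ m) :
    y * x < m * m := by
  rcases lt_or_gt_of_ne hx with hlt | hlt
  · obtain ⟨d, rfl⟩ := Nat.exists_eq_add_of_lt hlt
    obtain rfl : y = x + 2 * d + 2 := by omega
    nlinarith
  · obtain ⟨d, rfl⟩ := Nat.exists_eq_add_of_lt hlt
    obtain rfl : m = y + d + 1 := by omega
    nlinarith

theorem tendsto_K_div_pow {m a : ℕ} (ha : a ≤ m) (ψ : ℝ) :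
    Tendsto (fun ω : ℝ => K (2 * m) a ψ ω / ω ^ (m * m)) atTop
      (nhds ((Nat.choose (2 * m - a) (m - a) : ℝ) * ψ ^ (m - a) * (1 - ψ) ^ m)) := by
  have hterm : ∀ i ∈ Finset.range (2 * m - a + 1),
      Tendsto (fun ω : ℝ => (Nat.choose (2 * m - a) i : ℝ) * ψ ^ i * (1 - ψ) ^ (2 * m - a - i) *
          ω ^ ((2 * m - a - i) * (i + a)) / ω ^ (m * m)) atTop
        (nhds (if i = m - a then
          (Nat.choose (2 * m - a) (m - a) : ℝ) * ψ ^ (m - a) * (1 - ψ) ^ m else 0)) := by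
    intro i hi
    have hi' : i < 2 * m - a + 1 := Finset.mem_range.mp hi
    split_ifs with h
    · have h1 : 2 * m - a - i = m := by omega
      have h2 : i + a = m := by omega
      rw [h1, h2, h]
      refine tendsto_const_nhds.congr' ?_
      filter_upwards [eventually_gt_atTop 0] with ω hω
      field_simp
    · have hlt := mul_lt_sq_of_add_eq_two_mul
        (show (2 * m - a - i) + (i + a) = 2 * m by omega) (by omega)
      simpa only [mul_div_assoc, mul_zero] using
        (tendsto_pow_div_pow_atTop_zero (𝕜 := ℝ) hlt).const_mul
          ((Nat.choose (2 * m - a) i : ℝ) * ψ ^ i * (1 - ψ) ^ (2 * m - a - i))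
  have hsum := tendsto_finsetSum _ hterm
  rw [Finset.sum_ite_eq', if_pos (Finset.mem_range.mpr (by omega))] at hsum
  simpa only [K, Finset.sum_div] using hsum

theorem stmt_8 (n : ℕ) (hn : 2 ≤ n) (hne : Even n) (j : ℕ) (hj1 : 1 ≤ j) (hj : j ≤ n / 2)
    (ψ : ℝ) (hψ0 : 0 < ψ) (hψ1 : ψ < 1) :
    Filter.Tendsto (fun ω : ℝ => τ n j ψ ω) Filter.atTop
      (nhds ((1 / ψ ^ j) * (Nat.choose (n - j) (n / 2 - j) : ℝ) / (Nat.choose n (n / 2) : ℝ))) := by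
  obtain ⟨m, rfl⟩ := hne.exists_two_nsmul
  rw [smul_eq_mul] at *
  rw [Nat.mul_div_cancel_left m two_pos] at *
  have hψ : 0 < 1 - ψ := sub_pos.mpr hψ1
  have hchoose : (0 : ℝ) < Nat.choose (2 * m) m := by
    exact_mod_cast Nat.choose_pos (by omega)
  have hlim := (tendsto_K_div_pow hj ψ).div (tendsto_K_div_pow m.zero_le ψ)
    (by simp only [Nat.sub_zero]; positivity)
  have hpow : ψ ^ m = ψ ^ (m - j) * ψ ^ j := by rw [← pow_add, Nat.sub_add_cancel hj]
  have hval : (Nat.choose (2 * m - j) (m - j) : ℝ) * ψ ^ (m - j) * (1 - ψ) ^ m /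
      ((Nat.choose (2 * m - 0) (m - 0) : ℝ) * ψ ^ (m - 0) * (1 - ψ) ^ m) =
      (1 / ψ ^ j) * (Nat.choose (2 * m - j) (m - j) : ℝ) / (Nat.choose (2 * m) m : ℝ) := by
    simp only [Nat.sub_zero]
    rw [hpow]
    field_simp
  rw [hval] at hlim
  refine hlim.congr' ?_
  filter_upwards [eventually_gt_atTop 0] with ω hω
  exact div_div_div_cancel_right₀ (pow_pos hω _).ne' _ _
end

section
/- Let n ≥ 2 be an even integer and let ψ be a real with 0 < ψ < 1. Then for every integer y with 0 ≤ y ≤ n, as ω → +∞, p_{n,ψ,ω}(y) tends to 1 if y = n/2 and to 0 otherwise; that is, the (L)MBD(ψ,ω) converges in distribution to the Dirac measure concentrated at n/2 as ω → +∞. -/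
open Filter Finset

/-- The ratio of two powers `x ^ a / x ^ b` with `a ≤ b` tends at infinity to `1` when `a = b` and
to `0` otherwise. -/
lemma tendsto_pow_div_pow_atTop_ite {a b : ℕ} (hab : a ≤ b) :
    Tendsto (fun x : ℝ => x ^ a / x ^ b) atTop (nhds (if a = b then 1 else 0)) := by
  split_ifs with h
  · subst h
    refine tendsto_const_nhds.congr' ?_
    filter_upwards [eventually_gt_atTop 0] with x hx
    exact (div_self (pow_pos hx a).ne').symm
  · exact tendsto_pow_div_pow_atTop_zero (lt_of_le_of_ne hab h)

/-- A finite family of monomials with a unique one of top degree, normalized to have sum `1`,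
concentrates at infinity on that monomial. -/
lemma tendsto_monomial_div_sum_atTop {ι : Type*} [DecidableEq ι] {s : Finset ι} {c : ι → ℝ}
    {e : ι → ℕ} {m : ι} (hm : m ∈ s) (hc : c m ≠ 0) (he : ∀ i ∈ s, i ≠ m → e i < e m)
    {y : ι} (hy : y ∈ s) :
    Tendsto (fun x : ℝ => c y * x ^ e y / ∑ i ∈ s, c i * x ^ e i) atTop
      (nhds (if y = m then 1 else 0)) := by
  have hterm : ∀ i ∈ s, Tendsto (fun x : ℝ => c i * (x ^ e i / x ^ e m)) atTop
      (nhds (if i = m then c m else 0)) := by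
    intro i hi
    by_cases h : i = m
    · subst h
      simpa using (tendsto_pow_div_pow_atTop_ite (le_refl (e i))).const_mul (c i)
    · simpa [h, (he i hi h).ne] using
        (tendsto_pow_div_pow_atTop_ite (he i hi h).le).const_mul (c i)
  have hsum : Tendsto (fun x : ℝ => ∑ i ∈ s, c i * (x ^ e i / x ^ e m)) atTop (nhds (c m)) := by
    simpa [hm] using tendsto_finsetSum s hterm
  have hlim : (if y = m then c m else 0) / c m = if y = m then 1 else 0 := by
    split_ifs <;> simp [hc]
  rw [← hlim]
  refine ((hterm y hy).div hsum hc).congr' ?_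
  filter_upwards [eventually_gt_atTop 0] with x hx
  simp only [Pi.div_apply, ← mul_div_assoc, ← Finset.sum_div]
  exact div_div_div_cancel_right₀ (pow_pos hx _).ne' _ _

/-- The product `(n - i) * i` is maximal only at the midpoint `i = n / 2` of an even `n`. -/
lemma sub_mul_self_lt_of_ne_half {n i : ℕ} (hn : Even n) (hi : i ≤ n) (h : i ≠ n / 2) :
    (n - i) * i < (n - n / 2) * (n / 2) := by
  obtain ⟨k, rfl⟩ := hn
  have hk : (k + k) / 2 = k := by omega
  rw [hk] at h ⊢
  obtain ⟨j, hj⟩ := Nat.exists_eq_add_of_le hi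
  rw [hj, Nat.add_sub_cancel_left, ← hj, Nat.add_sub_cancel]
  zify at *
  have : (0 : ℤ) < (i - k) ^ 2 := by
    have := sub_ne_zero.mpr h
    positivity
  rw [show (j : ℤ) = k + k - i by linarith]
  nlinarith

theorem stmt_9 (n : ℕ) (hn : 2 ≤ n) (hne : Even n)
    (ψ : ℝ) (hψ0 : 0 < ψ) (hψ1 : ψ < 1) :
    ∀ y : ℕ, y ≤ n →
      Filter.Tendsto (fun ω : ℝ => lmbd n ψ ω y) Filter.atTop
        (nhds (if y = n / 2 then 1 else 0)) := by
  intro y hy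
  have hc : (Nat.choose n (n / 2) : ℝ) * ψ ^ (n / 2) * (1 - ψ) ^ (n - n / 2) ≠ 0 := by
    have hchoose : (0 : ℝ) < Nat.choose n (n / 2) := by
      exact_mod_cast Nat.choose_pos (Nat.div_le_self n 2)
    have hψ : 0 < 1 - ψ := sub_pos.mpr hψ1
    positivity
  have key := tendsto_monomial_div_sum_atTop (s := Finset.range (n + 1))
    (c := fun i => (Nat.choose n i : ℝ) * ψ ^ i * (1 - ψ) ^ (n - i))
    (e := fun i => (n - i) * i) (m := n / 2) (Finset.mem_range.mpr (by omega)) hc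
    (fun i hi h => sub_mul_self_lt_of_ne_half hne
      (Nat.lt_succ_iff.mp (Finset.mem_range.mp hi)) h)
    (y := y) (Finset.mem_range.mpr (by omega))
  simpa only [lmbd, K, Nat.sub_zero, Nat.add_zero] using key
end

section
/- Let n ≥ 1 be an odd integer and let ψ be a real with 0 < ψ < 1. Then, as ω → +∞, τ_1(ψ,ω) tends to ((n−1)/2 + ψ)/(nψ). -/
open Filter Finset

/-- A real polynomial function with exponents at most `M`, divided by `ω ^ M`, tends to the sum of
its coefficients of exponent exactly `M`. -/
lemma tendsto_sum_mul_pow_div_pow {ι : Type*} (s : Finset ι) (c : ι → ℝ) (e : ι → ℕ) (M : ℕ)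
    (he : ∀ i ∈ s, e i ≤ M) :
    Tendsto (fun ω : ℝ => (∑ i ∈ s, c i * ω ^ e i) / ω ^ M) atTop
      (nhds (∑ i ∈ s with e i = M, c i)) := by
  simp_rw [Finset.sum_div, Finset.sum_filter]
  refine tendsto_finsetSum s fun i hi => ?_
  split_ifs with h
  · refine tendsto_const_nhds.congr' ?_
    filter_upwards [eventually_gt_atTop 0] with ω hω
    rw [h, mul_div_cancel_right₀ _ (pow_pos hω M).ne']
  · simpa [mul_div_assoc] using
      (tendsto_pow_div_pow_atTop_zero (𝕜 := ℝ) (lt_of_le_of_ne (he i hi) h)).const_mul (c i)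

/-- For `n = 2 * m + 1`, the exponent `(n - y) * y` is at most `m * (m + 1)`. -/
lemma sub_mul_self_le {m y : ℕ} (hy : y ≤ 2 * m + 1) : (2 * m + 1 - y) * y ≤ m * (m + 1) := by
  obtain ⟨z, hz⟩ := Nat.exists_eq_add_of_le hy
  rw [hz, Nat.add_sub_cancel_left]
  rcases le_or_gt y m with h | h
  · obtain ⟨d, rfl⟩ := Nat.exists_eq_add_of_le h
    obtain rfl : z = y + 2 * d + 1 := by omega
    nlinarith
  · obtain ⟨d, rfl⟩ := Nat.exists_eq_add_of_lt h
    obtain ⟨rfl⟩ : m = z + d := by omega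
    nlinarith

/-- For `n = 2 * m + 1`, the exponent `(n - y) * y` is maximal exactly at `y = m` and
`y = m + 1`. -/
lemma filter_sub_mul_self_eq (m : ℕ) :
    {y ∈ range (2 * m + 1 + 1) | (2 * m + 1 - y) * y = m * (m + 1)} = {m, m + 1} := by
  ext y
  simp only [mem_filter, mem_range, mem_insert, mem_singleton]
  constructor
  · rintro ⟨hy, h⟩
    have hy' : y ≤ 2 * m + 1 := by omega
    zify [hy'] at h
    have : ((y : ℤ) - m) * (y - (m + 1)) = 0 := by linarith
    rcases mul_eq_zero.mp this with h | h <;> omega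
  · rintro (rfl | rfl)
    · refine ⟨by omega, ?_⟩
      rw [show 2 * y + 1 - y = y + 1 by omega, mul_comm]
    · refine ⟨by omega, ?_⟩
      rw [show 2 * m + 1 - (m + 1) = m by omega]

lemma tendsto_sum_mul_pow_sub_mul_self_div (m : ℕ) (c : ℕ → ℝ) :
    Tendsto (fun ω : ℝ => (∑ y ∈ range (2 * m + 1 + 1), c y * ω ^ ((2 * m + 1 - y) * y)) /
      ω ^ (m * (m + 1))) atTop (nhds (c m + c (m + 1))) := by
  have h := tendsto_sum_mul_pow_div_pow (range (2 * m + 1 + 1)) c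
    (fun y => (2 * m + 1 - y) * y) (m * (m + 1))
    fun y hy => sub_mul_self_le (Nat.lt_succ_iff.mp (mem_range.mp hy))
  rwa [filter_sub_mul_self_eq, sum_pair (by omega)] at h

/-- `(k + 1) ψ K_{k+1,1}` is the unnormalised mean of the distribution with normaliser
`K_{k+1,0}`. -/
lemma mul_K_one_eq_sum (k : ℕ) (ψ ω : ℝ) :
    ((k + 1 : ℕ) : ℝ) * ψ * K (k + 1) 1 ψ ω =
      ∑ y ∈ range (k + 1 + 1),
        y * ((Nat.choose (k + 1) y : ℝ) * ψ ^ y * (1 - ψ) ^ (k + 1 - y)) *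
          ω ^ ((k + 1 - y) * y) := by
  rw [sum_range_succ', K, mul_sum]
  simp only [Nat.add_sub_cancel, Nat.cast_zero, zero_mul, add_zero, Nat.add_sub_add_right]
  refine sum_congr rfl fun i _ => ?_
  have h : ((k + 1 : ℕ) : ℝ) * k.choose i = (k + 1).choose (i + 1) * (i + 1 : ℕ) :=
    mod_cast Nat.add_one_mul_choose_eq k i
  linear_combination ψ * ψ ^ i * (1 - ψ) ^ (k - i) * ω ^ ((k - i) * (i + 1)) * h

theorem stmt_11 (n : ℕ) (hn : 1 ≤ n) (hno : Odd n)
    (ψ : ℝ) (hψ0 : 0 < ψ) (hψ1 : ψ < 1) :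
    Filter.Tendsto (fun ω : ℝ => τ n 1 ψ ω) Filter.atTop
      (nhds ((((n : ℝ) - 1) / 2 + ψ) / ((n : ℝ) * ψ))) := by
  obtain ⟨m, rfl⟩ := hno
  have hψ1' : 0 < 1 - ψ := sub_pos.mpr hψ1
  set c : ℕ → ℝ := fun y =>
    (Nat.choose (2 * m + 1) y : ℝ) * ψ ^ y * (1 - ψ) ^ (2 * m + 1 - y) with hc
  have hchoose : 0 < ((2 * m + 1).choose m : ℝ) := mod_cast Nat.choose_pos (by omega)
  have hcm : c m = (2 * m + 1).choose m * ψ ^ m * (1 - ψ) ^ (m + 1) := by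
    simp only [hc, show 2 * m + 1 - m = m + 1 by omega]
  have hcm' : c (m + 1) = (2 * m + 1).choose m * ψ ^ (m + 1) * (1 - ψ) ^ m := by
    simp only [hc, show 2 * m + 1 - (m + 1) = m by omega, Nat.choose_symm_half]
  have hsum : c m + c (m + 1) = (2 * m + 1).choose m * ψ ^ m * (1 - ψ) ^ m := by
    rw [hcm, hcm']; ring
  have hpos : c m + c (m + 1) ≠ 0 := by rw [hsum]; positivity
  have hn0 : ((2 * m + 1 : ℕ) : ℝ) * ψ ≠ 0 := by positivity
  have hlim := ((tendsto_sum_mul_pow_sub_mul_self_div m fun y => y * c y).div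
    (tendsto_sum_mul_pow_sub_mul_self_div m c) hpos).div_const (((2 * m + 1 : ℕ) : ℝ) * ψ)
  have hval : (m * c m + (m + 1 : ℕ) * c (m + 1)) / (c m + c (m + 1)) =
      (((2 * m + 1 : ℕ) : ℝ) - 1) / 2 + ψ := by
    rw [div_eq_iff hpos, hsum, hcm, hcm']
    push_cast
    ring
  rw [hval] at hlim
  refine hlim.congr' ?_
  filter_upwards [eventually_gt_atTop 0] with ω hω
  have hK : K (2 * m + 1) 0 ψ ω =
      ∑ y ∈ range (2 * m + 1 + 1), c y * ω ^ ((2 * m + 1 - y) * y) := by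
    simp [K, hc]
  simp only [Pi.div_apply]
  rw [div_div_div_cancel_right₀ (pow_pos hω _).ne', ← hK, ← mul_K_one_eq_sum, τ, div_right_comm,
    mul_div_cancel_left₀ _ hn0]
end

section
/- Let n ≥ 1 be an odd integer and let ψ be a real with 0 < ψ < 1. Then, as ω → +∞, the mean E_{n,ψ,ω} of the (L)MBD(ψ,ω) tends to (n−1)/2 + ψ and its variance V_{n,ψ,ω} tends to ψ(1−ψ). -/
open Filter Finset

/-- The unnormalised weights, divided by their top power `ω ^ (m * (m + 1))`, converge. -/
lemma tendsto_weight_div_pow (m y : ℕ) (hy : y ≤ 2 * m + 1) (c : ℝ) :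
    Tendsto (fun ω : ℝ => c * ω ^ ((2 * m + 1 - y) * y) / ω ^ (m * (m + 1))) atTop
      (nhds (if y = m ∨ y = m + 1 then c else 0)) := by
  obtain ⟨z, hz⟩ := Nat.exists_eq_add_of_le hy
  have hsub : 2 * m + 1 - y = z := by omega
  rw [hsub]
  split_ifs with h
  · have he : z * y = m * (m + 1) := by
      rcases h with rfl | rfl
      · rw [show z = y + 1 by omega, mul_comm]
      · rw [show z = m by omega]
    rw [he]
    refine tendsto_const_nhds.congr' ?_
    filter_upwards [eventually_gt_atTop 0] with ω hω
    field_simp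
  · have he : z * y < m * (m + 1) := by
      rcases lt_or_gt_of_ne (fun hym => h (Or.inl hym)) with hlt | hgt
      · obtain ⟨d, rfl⟩ := Nat.exists_eq_add_of_lt hlt
        obtain rfl : z = y + 2 * d + 3 := by omega
        nlinarith
      · obtain ⟨d, rfl⟩ := Nat.exists_eq_add_of_lt (show m + 1 < y by omega)
        nlinarith
    simpa [mul_div_assoc] using (tendsto_pow_div_pow_atTop_zero (𝕜 := ℝ) he).const_mul c

lemma sum_range_ite_middle (m : ℕ) (f : ℕ → ℝ) :
    ∑ y ∈ range (2 * m + 1 + 1), (if y = m ∨ y = m + 1 then f y else 0) = f m + f (m + 1) := by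
  rw [← sum_filter, show (range (2 * m + 1 + 1)).filter (fun y => y = m ∨ y = m + 1)
    = {m, m + 1} by ext y; simp; omega, sum_pair (by omega)]

/-- The probabilities of the (L)MBD with odd `n` concentrate on the two middle points. -/
lemma tendsto_lmbd_s13 (m y : ℕ) (hy : y ≤ 2 * m + 1) (ψ : ℝ) (hψ0 : 0 < ψ) (hψ1 : ψ < 1) :
    Tendsto (fun ω : ℝ => lmbd (2 * m + 1) ψ ω y) atTop
      (nhds (if y = m ∨ y = m + 1 then (if y = m then 1 - ψ else ψ) else 0)) := by
  have hψ : 0 < 1 - ψ := sub_pos.2 hψ1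
  have hchoose : (0 : ℝ) < (2 * m + 1).choose m := by
    exact_mod_cast Nat.choose_pos (by omega)
  have hsymm : (2 * m + 1).choose (m + 1) = (2 * m + 1).choose m :=
    Nat.choose_symm_of_eq_add (by omega)
  have hK : Tendsto (fun ω : ℝ => K (2 * m + 1) 0 ψ ω / ω ^ (m * (m + 1))) atTop
      (nhds ((2 * m + 1).choose m * ψ ^ m * (1 - ψ) ^ m)) := by
    have hsum := tendsto_finsetSum (range (2 * m + 1 + 1)) fun y hy =>
      tendsto_weight_div_pow m y (by simpa [Nat.lt_succ_iff] using hy)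
        ((2 * m + 1).choose y * ψ ^ y * (1 - ψ) ^ (2 * m + 1 - y))
    rw [sum_range_ite_middle m fun y =>
      ((2 * m + 1).choose y * ψ ^ y * (1 - ψ) ^ (2 * m + 1 - y) : ℝ)] at hsum
    convert hsum using 2
    · simp [K, sum_div]
    · rw [hsymm, show 2 * m + 1 - m = m + 1 by omega, show 2 * m + 1 - (m + 1) = m by omega]
      ring
  have hdiv := (tendsto_weight_div_pow m y hy
    ((2 * m + 1).choose y * ψ ^ y * (1 - ψ) ^ (2 * m + 1 - y))).div hK (by positivity)
  have hlim : (if y = m ∨ y = m + 1 then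
      ((2 * m + 1).choose y * ψ ^ y * (1 - ψ) ^ (2 * m + 1 - y) : ℝ) else 0) /
        ((2 * m + 1).choose m * ψ ^ m * (1 - ψ) ^ m) =
      if y = m ∨ y = m + 1 then (if y = m then 1 - ψ else ψ) else 0 := by
    split_ifs with h hym
    · rw [hym, show 2 * m + 1 - m = m + 1 by omega]
      field_simp
      ring
    · rw [h.resolve_left hym, hsymm, show 2 * m + 1 - (m + 1) = m by omega]
      field_simp
      ring
    · exact zero_div _
  rw [hlim] at hdiv
  refine hdiv.congr' ?_
  filter_upwards [eventually_gt_atTop 0] with ω hω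
  exact div_div_div_cancel_right₀ (by positivity) _ _

theorem stmt_13 (n : ℕ) (hn : 1 ≤ n) (hno : Odd n)
    (ψ : ℝ) (hψ0 : 0 < ψ) (hψ1 : ψ < 1) :
    Filter.Tendsto (fun ω : ℝ => lmbdMean n ψ ω) Filter.atTop
      (nhds (((n : ℝ) - 1) / 2 + ψ)) ∧
    Filter.Tendsto (fun ω : ℝ => lmbdVar n ψ ω) Filter.atTop (nhds (ψ * (1 - ψ))) := by
  obtain ⟨m, rfl⟩ := hno
  have hpmf : ∀ y ∈ range (2 * m + 1 + 1), Tendsto (fun ω : ℝ => lmbd (2 * m + 1) ψ ω y) atTop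
      (nhds (if y = m ∨ y = m + 1 then (if y = m then 1 - ψ else ψ) else 0)) := fun y hy =>
    tendsto_lmbd_s13 m y (by simpa [Nat.lt_succ_iff] using hy) ψ hψ0 hψ1
  have hmean : Tendsto (fun ω : ℝ => lmbdMean (2 * m + 1) ψ ω) atTop
      (nhds ((((2 * m + 1 : ℕ) : ℝ) - 1) / 2 + ψ)) := by
    have hsum := tendsto_finsetSum _ fun (y : ℕ) hy => (hpmf y hy).const_mul (y : ℝ)
    simp only [mul_ite_zero] at hsum
    rw [sum_range_ite_middle m fun y => (y : ℝ) * if y = m then 1 - ψ else ψ] at hsum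
    convert hsum using 2
    · rfl
    · simp
      ring
  refine ⟨hmean, ?_⟩
  have hsum := tendsto_finsetSum _ fun (y : ℕ) hy =>
    ((tendsto_const_nhds (x := (y : ℝ))).sub hmean |>.pow 2).mul (hpmf y hy)
  simp only [mul_ite_zero] at hsum
  rw [sum_range_ite_middle m fun y => ((y : ℝ) - ((((2 * m + 1 : ℕ) : ℝ) - 1) / 2 + ψ)) ^ 2 *
    if y = m then 1 - ψ else ψ] at hsum
  convert hsum using 2
  · rfl
  · simp
    ring
end

section
/- Let n ≥ 1 be an odd integer and let ψ be a real with 0 < ψ < 1. Then, as ω → +∞: p_{n,ψ,ω}((n−1)/2) tends to 1−ψ, p_{n,ψ,ω}((n+1)/2) tends to ψ, and for every integer y with 0 ≤ y ≤ n and y ∉ {(n−1)/2, (n+1)/2}, p_{n,ψ,ω}(y) tends to 0. -/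
open Filter Finset

/-- The unnormalised weight of `y` under the (L)MBD, without its power of `ω`. -/
noncomputable def lmbdCoeff (n : ℕ) (ψ : ℝ) (y : ℕ) : ℝ :=
  (Nat.choose n y : ℝ) * ψ ^ y * (1 - ψ) ^ (n - y)

lemma K_zero_eq_sum (n : ℕ) (ψ ω : ℝ) :
    K n 0 ψ ω = ∑ i ∈ Finset.range (n + 1), lmbdCoeff n ψ i * ω ^ ((n - i) * i) := by
  simp [K, lmbdCoeff]

/-- For odd `n = 2 * m + 1` the exponent `(n - y) * y` is strictly below `(m + 1) * m`
away from the two central points. -/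
lemma exponent_lt_of_ne {m y : ℕ} (hy : y ≤ 2 * m + 1) (h₁ : y ≠ m) (h₂ : y ≠ m + 1) :
    (2 * m + 1 - y) * y < (m + 1) * m := by
  obtain ⟨z, hz⟩ := Nat.exists_eq_add_of_le hy
  have hsub : 2 * m + 1 - y = z := by omega
  rw [hsub]
  rcases lt_or_gt_of_ne h₁ with h | h
  · obtain ⟨k, rfl⟩ := Nat.exists_eq_add_of_lt h
    obtain rfl : z = y + 2 * k + 3 := by omega
    nlinarith
  · obtain ⟨k, rfl⟩ : ∃ k, y = m + 2 + k := ⟨y - (m + 2), by omega⟩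
    obtain rfl : m = z + 1 + k := by omega
    nlinarith

lemma tendsto_pow_exponent_div (m : ℕ) {y : ℕ} (hy : y ≤ 2 * m + 1) :
    Tendsto (fun ω : ℝ => ω ^ ((2 * m + 1 - y) * y) / ω ^ ((m + 1) * m)) atTop
      (nhds (if y = m ∨ y = m + 1 then 1 else 0)) := by
  split_ifs with h
  · have he : (2 * m + 1 - y) * y = (m + 1) * m := by
      rcases h with rfl | rfl
      · congr 1
        omega
      · rw [show 2 * m + 1 - (m + 1) = m by omega, mul_comm]
    rw [he]
    refine tendsto_const_nhds.congr' ?_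
    filter_upwards [eventually_gt_atTop 0] with ω hω
    exact (div_self (pow_pos hω _).ne').symm
  · rw [not_or] at h
    exact tendsto_pow_div_pow_atTop_zero (exponent_lt_of_ne hy h.1 h.2)

/-- The limit law of the (L)MBD with `n = 2 * m + 1` as `ω → ∞`. -/
lemma tendsto_lmbd_odd (m : ℕ) {ψ : ℝ} (hψ0 : 0 < ψ) (hψ1 : ψ < 1) {y : ℕ}
    (hy : y ≤ 2 * m + 1) :
    Tendsto (fun ω : ℝ => lmbd (2 * m + 1) ψ ω y) atTop
      (nhds (lmbdCoeff (2 * m + 1) ψ y * (if y = m ∨ y = m + 1 then 1 else 0) /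
        (lmbdCoeff (2 * m + 1) ψ m + lmbdCoeff (2 * m + 1) ψ (m + 1)))) := by
  have hcoeff : ∀ i ≤ 2 * m + 1, 0 < lmbdCoeff (2 * m + 1) ψ i := fun i hi =>
    mul_pos (mul_pos (Nat.cast_pos.2 (Nat.choose_pos hi)) (pow_pos hψ0 _))
      (pow_pos (sub_pos.2 hψ1) _)
  have hterm : ∀ i ≤ 2 * m + 1,
      Tendsto (fun ω : ℝ => lmbdCoeff (2 * m + 1) ψ i *
        (ω ^ ((2 * m + 1 - i) * i) / ω ^ ((m + 1) * m))) atTop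
        (nhds (lmbdCoeff (2 * m + 1) ψ i * (if i = m ∨ i = m + 1 then 1 else 0))) :=
    fun i hi => (tendsto_pow_exponent_div m hi).const_mul _
  have hsum := tendsto_finsetSum (Finset.range (2 * m + 1 + 1)) fun i hi =>
    hterm i (Nat.lt_succ_iff.1 (Finset.mem_range.1 hi))
  have hlim : ∑ i ∈ Finset.range (2 * m + 1 + 1),
      lmbdCoeff (2 * m + 1) ψ i * (if i = m ∨ i = m + 1 then 1 else 0) =
      lmbdCoeff (2 * m + 1) ψ m + lmbdCoeff (2 * m + 1) ψ (m + 1) := by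
    rw [← Finset.sum_pair (Nat.succ_ne_self m).symm]
    simp only [mul_ite, mul_one, mul_zero]
    rw [← Finset.sum_filter]
    refine Finset.sum_congr ?_ fun _ _ => rfl
    ext i
    simp only [Finset.mem_filter, Finset.mem_range, Finset.mem_insert, Finset.mem_singleton]
    omega
  rw [hlim] at hsum
  refine ((hterm y hy).div hsum
    (add_pos (hcoeff _ (by omega)) (hcoeff _ (by omega))).ne').congr' ?_
  filter_upwards [eventually_gt_atTop 0] with ω hω
  simp only [Pi.div_apply, ← mul_div_assoc]
  rw [← Finset.sum_div, div_div_div_cancel_right₀ (pow_pos hω _).ne', ← K_zero_eq_sum]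
  rfl

lemma lmbdCoeff_central (m : ℕ) (ψ : ℝ) :
    lmbdCoeff (2 * m + 1) ψ m =
      (Nat.choose (2 * m + 1) m : ℝ) * ψ ^ m * (1 - ψ) ^ m * (1 - ψ) := by
  rw [lmbdCoeff, show 2 * m + 1 - m = m + 1 by omega, pow_succ, mul_assoc _ _ (1 - ψ)]

lemma lmbdCoeff_central_succ (m : ℕ) (ψ : ℝ) :
    lmbdCoeff (2 * m + 1) ψ (m + 1) =
      (Nat.choose (2 * m + 1) m : ℝ) * ψ ^ m * (1 - ψ) ^ m * ψ := by
  rw [lmbdCoeff, show 2 * m + 1 - (m + 1) = m by omega, Nat.choose_symm_half]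
  ring

theorem stmt_14 (n : ℕ) (hn : 1 ≤ n) (hno : Odd n)
    (ψ : ℝ) (hψ0 : 0 < ψ) (hψ1 : ψ < 1) :
    Filter.Tendsto (fun ω : ℝ => lmbd n ψ ω ((n - 1) / 2)) Filter.atTop (nhds (1 - ψ)) ∧
    Filter.Tendsto (fun ω : ℝ => lmbd n ψ ω ((n + 1) / 2)) Filter.atTop (nhds ψ) ∧
    ∀ y : ℕ, y ≤ n → y ≠ (n - 1) / 2 → y ≠ (n + 1) / 2 →
      Filter.Tendsto (fun ω : ℝ => lmbd n ψ ω y) Filter.atTop (nhds 0) := by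
  obtain ⟨m, rfl⟩ := hno
  rw [show (2 * m + 1 - 1) / 2 = m by omega, show (2 * m + 1 + 1) / 2 = m + 1 by omega]
  have hC : (Nat.choose (2 * m + 1) m : ℝ) * ψ ^ m * (1 - ψ) ^ m ≠ 0 :=
    (mul_pos (mul_pos (Nat.cast_pos.2 (Nat.choose_pos (by omega))) (pow_pos hψ0 _))
      (pow_pos (sub_pos.2 hψ1) _)).ne'
  have htotal : lmbdCoeff (2 * m + 1) ψ m + lmbdCoeff (2 * m + 1) ψ (m + 1) =
      (Nat.choose (2 * m + 1) m : ℝ) * ψ ^ m * (1 - ψ) ^ m := by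
    rw [lmbdCoeff_central, lmbdCoeff_central_succ]
    ring
  refine ⟨?_, ?_, fun y hy h₁ h₂ => ?_⟩
  · have h := tendsto_lmbd_odd m hψ0 hψ1 (y := m) (by omega)
    rwa [htotal, if_pos (Or.inl rfl), mul_one, lmbdCoeff_central,
      mul_div_cancel_left₀ _ hC] at h
  · have h := tendsto_lmbd_odd m hψ0 hψ1 (y := m + 1) (by omega)
    rwa [htotal, if_pos (Or.inr rfl), mul_one, lmbdCoeff_central_succ,
      mul_div_cancel_left₀ _ hC] at h
  · have h := tendsto_lmbd_odd m hψ0 hψ1 hy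
    rwa [if_neg (not_or.2 ⟨h₁, h₂⟩), mul_zero, zero_div] at h
end

section
/- Let n ≥ 2 be an integer, let ψ be a real with 1/2 < ψ < 1 and let ω be a real with ω > 1. Then K_{n,1}(ψ,ω) < K_{n,0}(ψ,ω), i.e. τ_1(ψ,ω) < 1; consequently the individual success probability π = ψ τ_1(ψ,ω) satisfies π < ψ. -/
open Filter Finset

/-- Conditioning on one trial: `K (m+1) 0` splits into a success part and a failure part. -/
theorem K_succ_zero (m : ℕ) (ψ ω : ℝ) :
    K (m + 1) 0 ψ ω = ψ * K (m + 1) 1 ψ ω + (1 - ψ) * ∑ i ∈ Finset.range (m + 1),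
      (m.choose i : ℝ) * (ψ ^ i * (1 - ψ) ^ (m - i) * ω ^ ((m - i + 1) * i)) := by
  have h := Finset.sum_choose_succ_mul (R := ℝ)
    (fun i j => ψ ^ i * (1 - ψ) ^ j * ω ^ (j * i)) m
  simp only [K, Nat.sub_zero, Nat.add_sub_cancel, add_zero, mul_assoc] at h ⊢
  rw [h, add_comm, Finset.mul_sum, Finset.mul_sum]
  congr 1
  · refine Finset.sum_congr rfl fun i _ => ?_
    ring
  · refine Finset.sum_congr rfl fun i hi => ?_
    rw [Nat.sub_add_comm (Nat.lt_succ_iff.mp (Finset.mem_range.mp hi))]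
    ring

theorem pow_mul_pow_le_swap {x y : ℝ} (hy : 0 ≤ y) (hyx : y ≤ x) {i j : ℕ} (hij : i ≤ j) :
    x ^ i * y ^ j ≤ x ^ j * y ^ i := by
  obtain ⟨d, rfl⟩ := Nat.exists_eq_add_of_le hij
  have hx : 0 ≤ x := hy.trans hyx
  calc x ^ i * y ^ (i + d) = x ^ i * y ^ i * y ^ d := by ring
    _ ≤ x ^ i * y ^ i * x ^ d := by gcongr
    _ = x ^ (i + d) * y ^ i := by ring

theorem swap_sub_mul_swap_sub_nonneg {x y ω : ℝ} (hy : 0 ≤ y) (hyx : y ≤ x) (hω : 1 ≤ ω)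
    (i j : ℕ) :
    0 ≤ (x ^ i * y ^ j - x ^ j * y ^ i) * (ω ^ ((j + 1) * i) - ω ^ ((i + 1) * j)) := by
  rcases le_total i j with hij | hij
  · refine mul_nonneg_of_nonpos_of_nonpos (sub_nonpos.mpr (pow_mul_pow_le_swap hy hyx hij))
      (sub_nonpos.mpr (pow_le_pow_right₀ hω ?_))
    nlinarith
  · refine mul_nonneg (sub_nonneg.mpr (pow_mul_pow_le_swap hy hyx hij))
      (sub_nonneg.mpr (pow_le_pow_right₀ hω ?_))
    nlinarith

theorem sum_choose_mul_sub_swap_pos {m : ℕ} (hm : m ≠ 0) {x y ω : ℝ} (hy : 0 ≤ y) (hyx : y < x)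
    (hω : 1 < ω) :
    0 < ∑ i ∈ Finset.range (m + 1), (m.choose i : ℝ) *
      (x ^ i * y ^ (m - i) * (ω ^ ((m - i + 1) * i) - ω ^ ((i + 1) * (m - i)))) := by
  set f : ℕ → ℝ := fun i => (m.choose i : ℝ) *
      (x ^ i * y ^ (m - i) * (ω ^ ((m - i + 1) * i) - ω ^ ((i + 1) * (m - i)))) with hf
  have hpair : ∀ i ∈ Finset.range (m + 1), f i + f (m + 1 - 1 - i) = (m.choose i : ℝ) *
      ((x ^ i * y ^ (m - i) - x ^ (m - i) * y ^ i) *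
        (ω ^ ((m - i + 1) * i) - ω ^ ((i + 1) * (m - i)))) := by
    intro i hi
    have him : i ≤ m := Nat.lt_succ_iff.mp (Finset.mem_range.mp hi)
    simp only [hf, Nat.add_sub_cancel, Nat.choose_symm him, Nat.sub_sub_self him]
    ring
  have hsum : 0 < ∑ i ∈ Finset.range (m + 1), (f i + f (m + 1 - 1 - i)) := by
    rw [Finset.sum_congr rfl hpair]
    refine Finset.sum_pos' (fun i _ => mul_nonneg (Nat.cast_nonneg _)
      (swap_sub_mul_swap_sub_nonneg hy hyx.le hω.le i (m - i))) ⟨m, by simp, ?_⟩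
    have hxy : y ^ m < x ^ m := pow_lt_pow_left₀ hyx hy hm
    have hωm : 1 < ω ^ m := one_lt_pow₀ hω hm
    simpa using mul_pos (sub_pos.mpr hxy) (sub_pos.mpr hωm)
  rw [Finset.sum_add_distrib, Finset.sum_range_reflect] at hsum
  linarith

theorem K_one_lt_K_zero {n : ℕ} (hn : 2 ≤ n) {ψ ω : ℝ} (hψ0 : 1 / 2 < ψ) (hψ1 : ψ < 1)
    (hω : 1 < ω) : K n 1 ψ ω < K n 0 ψ ω := by
  obtain ⟨m, rfl⟩ := Nat.exists_eq_add_of_le' (one_le_two.trans hn)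
  have hpos := sum_choose_mul_sub_swap_pos (m := m) (by omega) (x := ψ) (y := 1 - ψ)
    (by linarith) (by linarith) hω
  have hK : K (m + 1) 1 ψ ω = ∑ i ∈ Finset.range (m + 1),
      (m.choose i : ℝ) * (ψ ^ i * (1 - ψ) ^ (m - i) * ω ^ ((i + 1) * (m - i))) := by
    simp only [K, Nat.add_sub_cancel]
    refine Finset.sum_congr rfl fun i _ => ?_
    rw [mul_comm (m - i)]
    ring
  simp only [mul_sub, Finset.sum_sub_distrib] at hpos
  rw [← hK] at hpos
  rw [K_succ_zero]
  nlinarith [mul_pos (sub_pos.mpr hψ1) hpos]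

theorem K_pos (n a : ℕ) {ψ ω : ℝ} (hψ0 : 0 < ψ) (hψ1 : ψ < 1) (hω : 0 < ω) :
    0 < K n a ψ ω := by
  have hψ : 0 < 1 - ψ := sub_pos.mpr hψ1
  refine Finset.sum_pos (fun i hi => ?_) ⟨0, by simp⟩
  have hc : 0 < (n - a).choose i :=
    Nat.choose_pos (Nat.lt_succ_iff.mp (Finset.mem_range.mp hi))
  positivity

theorem stmt_16 (n : ℕ) (hn : 2 ≤ n) (ψ : ℝ) (hψ0 : 1 / 2 < ψ) (hψ1 : ψ < 1)
    (ω : ℝ) (hω : 1 < ω) :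
    K n 1 ψ ω < K n 0 ψ ω ∧ τ n 1 ψ ω < 1 ∧ ψ * τ n 1 ψ ω < ψ := by
  have hψ : 0 < ψ := by linarith
  have hK := K_one_lt_K_zero hn hψ0 hψ1 hω
  have hτ : τ n 1 ψ ω < 1 := (div_lt_one (K_pos n 0 hψ hψ1 (by linarith))).mpr hK
  exact ⟨hK, hτ, mul_lt_of_lt_one_right hψ hτ⟩
end

section
/- For an integer n ≥ 1, regard D_n = K_{n,1} − K_{n,0} as a polynomial in the two variables ψ and ω with real (or rational) coefficients, where K_{n,a} = Σ_{i=0}^{n−a} C(n−a,i) ψ^i (1−ψ)^{n−a−i} ω^{(n−a−i)(i+a)}. Then the polynomial (ψ−1)(2ψ−1)(ω−1) divides D_n; moreover, if n is odd, the polynomial (ψ−1)(2ψ−1)(ω−1)(ω+1) divides D_n. -/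
open MvPolynomial

/-- The bivariate polynomial `K_{n,a}` in the variables `ψ = X 0` and `ω = X 1`. -/
noncomputable def Kpoly (n a : ℕ) : MvPolynomial (Fin 2) ℚ :=
  ∑ i ∈ Finset.range (n - a + 1),
    (Nat.choose (n - a) i : MvPolynomial (Fin 2) ℚ) * (X 0) ^ i *
      (1 - X 0) ^ (n - a - i) * (X 1) ^ ((n - a - i) * (i + a))

/-- `D_n = K_{n,1} − K_{n,0}` as a bivariate polynomial. -/
noncomputable def Dpoly (n : ℕ) : MvPolynomial (Fin 2) ℚ := Kpoly n 1 - Kpoly n 0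

section CommRing

variable {R : Type*} [CommRing R]

/-- `w ^ d - 1` divides `w ^ p - w ^ q` as soon as `p ≡ q` modulo `d`. -/
lemma pow_sub_one_dvd_pow_sub_pow_of_modEq (w : R) {d p q : ℕ} (h : p ≡ q [MOD d]) :
    w ^ d - 1 ∣ w ^ p - w ^ q := by
  wlog hqp : q ≤ p generalizing p q
  · rw [dvd_sub_comm]
    exact this h.symm (le_of_not_ge hqp)
  obtain ⟨k, hk⟩ := (Nat.modEq_iff_dvd' hqp).mp h.symm
  obtain rfl : p = q + d * k := by omega
  have hfac : w ^ (q + d * k) - w ^ q = w ^ q * ((w ^ d) ^ k - 1 ^ k) := by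
    rw [pow_add, pow_mul, one_pow]; ring
  rw [hfac]
  exact (sub_dvd_pow_sub_pow _ _ k).mul_left _

lemma sub_dvd_pow_mul_pow_sub_pow_mul_pow (a b : R) (i j : ℕ) :
    a - b ∣ a ^ i * b ^ j - a ^ j * b ^ i := by
  have hfac : a ^ i * b ^ j - a ^ j * b ^ i =
      (a ^ i - b ^ i) * b ^ j - (a ^ j - b ^ j) * b ^ i := by ring
  rw [hfac]
  exact dvd_sub ((sub_dvd_pow_sub_pow a b i).mul_right _)
    ((sub_dvd_pow_sub_pow a b j).mul_right _)

/-- A homogeneous binomial sum with antisymmetric weights divisible by `c`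
is, up to a factor of two, divisible by `(a - b) * c`. -/
lemma sub_mul_dvd_two_mul_sum_of_antisymm (a b c : R) (m : ℕ) (e : ℕ → R)
    (hanti : ∀ i ≤ m, e (m - i) = -e i) (hdvd : ∀ i ≤ m, c ∣ e i) :
    (a - b) * c ∣
      2 * ∑ i ∈ Finset.range (m + 1), (m.choose i : R) * a ^ i * b ^ (m - i) * e i := by
  have hsum : 2 * ∑ i ∈ Finset.range (m + 1), (m.choose i : R) * a ^ i * b ^ (m - i) * e i =
      ∑ i ∈ Finset.range (m + 1),
        (m.choose i : R) * ((a ^ i * b ^ (m - i) - a ^ (m - i) * b ^ i) * e i) := by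
    rw [two_mul]
    nth_rewrite 2 [← Finset.sum_range_reflect]
    rw [← Finset.sum_add_distrib]
    refine Finset.sum_congr rfl fun i hi => ?_
    have him : i ≤ m := Nat.lt_succ_iff.mp (Finset.mem_range.mp hi)
    rw [show m + 1 - 1 - i = m - i by omega, Nat.sub_sub_self him, Nat.choose_symm him,
      hanti i him]
    ring
  rw [hsum]
  refine Finset.dvd_sum fun i hi => Dvd.dvd.mul_left ?_ _
  exact mul_dvd_mul (sub_dvd_pow_mul_pow_sub_pow_mul_pow a b i (m - i))
    (hdvd i (Nat.lt_succ_iff.mp (Finset.mem_range.mp hi)))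

/-- Pascal's rule for homogeneous binomial sums with weights `f`. -/
lemma sum_choose_succ_mul_pow_mul_pow (a b : R) (m : ℕ) (f : ℕ → R) :
    ∑ i ∈ Finset.range (m + 2), ((m + 1).choose i : R) * a ^ i * b ^ (m + 1 - i) * f i =
      ∑ i ∈ Finset.range (m + 1),
        (m.choose i : R) * a ^ i * b ^ (m - i) * (a * f (i + 1) + b * f i) := by
  have hlast : ∑ i ∈ Finset.range (m + 1), (m.choose i : R) * a ^ i * b ^ (m - i) * (b * f i) =
      ∑ i ∈ Finset.range (m + 2), (m.choose i : R) * a ^ i * b ^ (m + 1 - i) * f i := by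
    rw [Finset.sum_range_succ _ (m + 1), Nat.choose_succ_self]
    simp only [Nat.cast_zero, zero_mul, add_zero]
    refine Finset.sum_congr rfl fun i hi => ?_
    have him : i ≤ m := Nat.lt_succ_iff.mp (Finset.mem_range.mp hi)
    rw [Nat.succ_sub him, pow_succ]
    ring
  simp only [mul_add, Finset.sum_add_distrib]
  rw [hlast, Finset.sum_range_succ' _ (m + 1), Finset.sum_range_succ' _ (m + 1), ← add_assoc,
    ← Finset.sum_add_distrib]
  congr 1
  · refine Finset.sum_congr rfl fun i _ => ?_
    rw [Nat.choose_succ_succ, Nat.add_sub_add_right]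
    push_cast
    ring
  · simp

end CommRing

lemma Dpoly_succ (m : ℕ) :
    Dpoly (m + 1) = (1 - X 0) * ∑ i ∈ Finset.range (m + 1),
      (m.choose i : MvPolynomial (Fin 2) ℚ) * X 0 ^ i * (1 - X 0) ^ (m - i) *
        (X 1 ^ ((m - i) * (i + 1)) - X 1 ^ ((m + 1 - i) * i)) := by
  have hzero := sum_choose_succ_mul_pow_mul_pow (X 0 : MvPolynomial (Fin 2) ℚ) (1 - X 0) m
    (fun i => X 1 ^ ((m + 1 - i) * i))
  simp only [Dpoly, Kpoly, Nat.add_sub_cancel, Nat.sub_zero, add_zero]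
  rw [hzero, ← Finset.sum_sub_distrib, Finset.mul_sum]
  refine Finset.sum_congr rfl fun i _ => ?_
  rw [Nat.add_sub_add_right]
  ring

lemma mul_pow_sub_one_dvd_Dpoly_succ {m d : ℕ} (hd : ∀ i ≤ m, m - i ≡ i [MOD d]) :
    ((X 0 - 1) * (2 * X 0 - 1) * (X 1 ^ d - 1) : MvPolynomial (Fin 2) ℚ) ∣ Dpoly (m + 1) := by
  have htwo : IsUnit (2 : MvPolynomial (Fin 2) ℚ) := by
    have hmap := (isUnit_iff_ne_zero.mpr (two_ne_zero (α := ℚ))).map (C (σ := Fin 2))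
    rwa [map_ofNat] at hmap
  have hsum := sub_mul_dvd_two_mul_sum_of_antisymm (X 0 : MvPolynomial (Fin 2) ℚ) (1 - X 0)
    (X 1 ^ d - 1) m (fun i => X 1 ^ ((m - i) * (i + 1)) - X 1 ^ ((m + 1 - i) * i))
    (fun i hi => by
      simp only [Nat.sub_sub_self hi, show m + 1 - (m - i) = i + 1 by omega,
        Nat.succ_sub hi, Nat.succ_eq_add_one]
      ring)
    (fun i hi => by
      refine pow_sub_one_dvd_pow_sub_pow_of_modEq _ ?_
      rw [Nat.succ_sub hi, Nat.succ_eq_add_one, mul_add, add_mul, mul_one, one_mul]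
      exact (hd i hi).add_left _)
  rw [htwo.dvd_mul_left] at hsum
  rw [Dpoly_succ, mul_assoc]
  refine mul_dvd_mul ⟨-1, by ring⟩ ?_
  rwa [show (2 * X 0 - 1 : MvPolynomial (Fin 2) ℚ) = X 0 - (1 - X 0) by ring]

theorem stmt_18 (n : ℕ) (hn : 1 ≤ n) :
    ((X 0 - 1) * (2 * X 0 - 1) * (X 1 - 1) : MvPolynomial (Fin 2) ℚ) ∣ Dpoly n ∧
    (Odd n →
      ((X 0 - 1) * (2 * X 0 - 1) * (X 1 - 1) * (X 1 + 1) : MvPolynomial (Fin 2) ℚ) ∣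
        Dpoly n) := by
  obtain ⟨m, rfl⟩ : ∃ m, n = m + 1 := ⟨n - 1, by omega⟩
  refine ⟨?_, fun hodd => ?_⟩
  · simpa using mul_pow_sub_one_dvd_Dpoly_succ (m := m) (d := 1) fun i _ => Nat.modEq_one
  · have hdvd := mul_pow_sub_one_dvd_Dpoly_succ (m := m) (d := 2) fun i hi => by
      obtain ⟨k, hk⟩ := hodd
      rw [Nat.ModEq]
      omega
    rwa [show (X 1 ^ 2 - 1 : MvPolynomial (Fin 2) ℚ) = (X 1 - 1) * (X 1 + 1) by ring,
      ← mul_assoc] at hdvd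
end
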